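/- Let d, N be positive integers, let G₀,…,G_{N−1} be symmetric positive-definite real d×d matrices, let ν₁,…,ν_{N−1} ∈ ℝ^d, and let a, b ∈ ℝ^d. Define μ_{N−1} := ( Σ_{i=0}^{N−1} G_i^{−1} )^{−1} ( 2(a − b) − Σ_{i=0}^{N−1} G_i^{−1} Σ_{j=i+1}^{N−1} ν_j ), and for each i = 0,…,N−1 set u_i := −(1/2) G_i^{−1} ( μ_{N−1} + Σ_{j=i+1}^{N−1} ν_j ) and μ_i := μ_{N−1} + Σ_{j=i+1}^{N−1} ν_j. Then (u₀,…,u_{N−1}, μ₀,…,μ_{N−1}) satisfies the linear system: 2 G_i u_i + μ_i = 0 for i = 0,…,N−1; ν_i + μ_i = μ_{i−1} for i = 1,…,N−1; and Σ_{i=0}^{N−1} u_i = b − a. -/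

import Mathlib

open Matrix Finset

/-!
Stationarity `2 Gᵢ uᵢ + μᵢ = 0` determines the controls from the multipliers, and the recurrence
`νᵢ + μᵢ = μᵢ₋₁` makes every multiplier equal to the last one plus a tail sum of `ν`. The endpoint
condition `∑ uᵢ = b - a` then becomes an equation in the last multiplier alone, with coefficient
matrix `∑ Gᵢ⁻¹`; the closed formula for that multiplier is its solution.
-/

section TailSum

variable {ι M : Type*} [LinearOrder ι] [LocallyFiniteOrderTop ι] [AddCommMonoid M]

lemma add_sum_Ioi_eq_sum_Ioi_of_covBy {i j : ι} (hji : j ⋖ i) (f : ι → M) :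
    f i + ∑ k ∈ Ioi i, f k = ∑ k ∈ Ioi j, f k := by
  have hIci : Ici i = Ioi j := by
    simpa only [← coe_inj, coe_Ici, coe_Ioi] using hji.Ioi_eq.symm
  rw [add_sum_Ioi_eq_sum_Ici, hIci]

end TailSum

section LinearSystem

variable {ι n R : Type*} [Fintype n] [DecidableEq n] [CommRing R]

lemma eq_inv_mulVec_iff_mulVec_eq {A : Matrix n n R} (hA : IsUnit A) {x y : n → R} :
    x = A⁻¹ *ᵥ y ↔ A *ᵥ x = y := by
  have hdet : IsUnit A.det := (isUnit_iff_isUnit_det A).1 hA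
  constructor
  · rintro rfl
    rw [mulVec_mulVec, mul_nonsing_inv A hdet, one_mulVec]
  · rintro rfl
    rw [mulVec_mulVec, nonsing_inv_mul A hdet, one_mulVec]

lemma smul_mulVec_neg_invOf_smul_inv_mulVec {A : Matrix n n R} (hA : IsUnit A) (c : R)
    [Invertible c] (x : n → R) : c • A *ᵥ -(⅟c • A⁻¹ *ᵥ x) = -x := by
  have hAx : A *ᵥ A⁻¹ *ᵥ x = x := (eq_inv_mulVec_iff_mulVec_eq hA).1 rfl
  rw [mulVec_neg, mulVec_smul, hAx, smul_neg, smul_invOf_smul]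

lemma sum_mulVec_add_eq_iff {s : Finset ι} {B : ι → Matrix n n R} (hB : IsUnit (∑ i ∈ s, B i))
    {x y : n → R} {t : ι → n → R} :
    ∑ i ∈ s, B i *ᵥ (x + t i) = y ↔ x = (∑ i ∈ s, B i)⁻¹ *ᵥ (y - ∑ i ∈ s, B i *ᵥ t i) := by
  rw [eq_inv_mulVec_iff_mulVec_eq hB, eq_sub_iff_add_eq, sum_mulVec]
  simp only [mulVec_add, sum_add_distrib]

end LinearSystem

lemma isUnit_sum_inv_of_posDef {ι n K : Type*} [Fintype n] [DecidableEq n] [Field K]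
    [PartialOrder K] [StarRing K] [AddLeftMono K] {s : Finset ι} (hs : s.Nonempty)
    {A : ι → Matrix n n K} (hA : ∀ i ∈ s, (A i).PosDef) :
    IsUnit (∑ i ∈ s, (A i)⁻¹) :=
  (posDef_sum hs fun i hi => (hA i hi).inv).isUnit

theorem stmt2_general {ι n R : Type*} [LinearOrder ι] [LocallyFiniteOrderTop ι] [Fintype ι]
    [Fintype n] [DecidableEq n] [CommRing R] [Invertible (2 : R)]
    (G : ι → Matrix n n R) (hG : ∀ i, IsUnit (G i)) (hS : IsUnit (∑ i, (G i)⁻¹))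
    (ν : ι → n → R) (a b μlast : n → R)
    (hμlast : μlast = (∑ i, (G i)⁻¹)⁻¹ *ᵥ
      ((2 : R) • (a - b) - ∑ i, (G i)⁻¹ *ᵥ ∑ j ∈ Ioi i, ν j))
    (u μ : ι → n → R)
    (hu : ∀ i, u i = -(⅟(2 : R) • (G i)⁻¹ *ᵥ (μlast + ∑ j ∈ Ioi i, ν j)))
    (hμ : ∀ i, μ i = μlast + ∑ j ∈ Ioi i, ν j) :
    (∀ i, (2 : R) • G i *ᵥ u i + μ i = 0) ∧
    (∀ i j, j ⋖ i → ν i + μ i = μ j) ∧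
    ∑ i, u i = b - a := by
  refine ⟨fun i => ?stationarity, fun i j hji => ?recurrence, ?endpoint⟩
  case stationarity =>
    rw [hu, hμ, smul_mulVec_neg_invOf_smul_inv_mulVec (hG i), neg_add_cancel]
  case recurrence =>
    rw [hμ, hμ, add_left_comm, add_sum_Ioi_eq_sum_Ioi_of_covBy hji]
  case endpoint =>
    have hsum : ∑ i, (G i)⁻¹ *ᵥ (μlast + ∑ j ∈ Ioi i, ν j) = (2 : R) • (a - b) :=
      (sum_mulVec_add_eq_iff hS).2 hμlast
    simp only [hu, sum_neg_distrib, ← smul_sum]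
    rw [hsum, invOf_smul_smul, neg_sub]

/-- The ProbGEORCE update scheme: the explicitly defined multipliers and controls
satisfy the fixed-coefficient optimality system
`2 Gᵢ uᵢ + μᵢ = 0`, `νᵢ + μᵢ = μ_{i-1}`, `Σᵢ uᵢ = b - a`. -/
theorem stmt2 (d N : ℕ) (hd : 0 < d) (hN : 0 < N)
    (G : Fin N → Matrix (Fin d) (Fin d) ℝ)
    (hG : ∀ i, (G i).PosDef) (hGsym : ∀ i, (G i).IsSymm)
    (ν : Fin N → Fin d → ℝ) (a b : Fin d → ℝ)
    (μlast : Fin d → ℝ)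
    (hμlast : μlast = (∑ i, (G i)⁻¹)⁻¹.mulVec
      ((2 : ℝ) • (a - b) - ∑ i, (G i)⁻¹.mulVec (∑ j ∈ Finset.Ioi i, ν j)))
    (u μ : Fin N → Fin d → ℝ)
    (hu : ∀ i, u i = -((1 / 2 : ℝ) • (G i)⁻¹.mulVec (μlast + ∑ j ∈ Finset.Ioi i, ν j)))
    (hμ : ∀ i, μ i = μlast + ∑ j ∈ Finset.Ioi i, ν j) :
    (∀ i, (2 : ℝ) • (G i).mulVec (u i) + μ i = 0) ∧
    (∀ i j : Fin N, (j : ℕ) + 1 = (i : ℕ) → ν i + μ i = μ j) ∧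
    (∑ i, u i = b - a) := by
  have hS : IsUnit (∑ i, (G i)⁻¹) := isUnit_sum_inv_of_posDef ⟨⟨0, hN⟩, mem_univ _⟩ fun i _ => hG i
  simpa using stmt2_general G (fun i => (hG i).isUnit) hS ν a b μlast hμlast u μ
    (by simpa using hu) hμ
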